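/- arXiv:2210.04374 — 2 statements merged into one kernel-verified Lean document; each statement's English description precedes it below -/
import Mathlib

section
/- Let λ ≥ 2 be an integer with λ not divisible by 3, and let X be a λ-normed plane. Then X does not satisfy the second non-uniqueness condition: there do not exist unit vectors x₁, x₂ of the first type and a unit vector x₃ of the zero type, together with norming functionals φ₁, φ₂, φ₃ for x₁, x₂, x₃, such that φ₁ + φ₂ + φ₃ = 0 and x₃ is the only unit vector y with φ₃(y) = 1. -/
open Real

/-- The vertices of a regular 2λ-gon centered at the origin, with circumradius r and
initial angle θ. -/
noncomputable def polyVerts (lam : ℕ) (r θ : ℝ) : Fin (2 * lam) → ℝ × ℝ :=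
  fun k => (r * Real.cos (θ + (k : ℕ) * π / lam), r * Real.sin (θ + (k : ℕ) * π / lam))

/-- N : ℝ² → ℝ is a norm. -/
def IsNormOn (N : ℝ × ℝ → ℝ) : Prop :=
  (∀ x y : ℝ × ℝ, N (x + y) ≤ N x + N y) ∧
  (∀ (c : ℝ) (x : ℝ × ℝ), N (c • x) = |c| * N x) ∧
  (∀ x : ℝ × ℝ, N x = 0 → x = 0)

/-- N is a λ-plane norm: a norm on ℝ² whose closed unit ball is a regular 2λ-gon
centered at the origin. -/
def IsLambdaNorm (lam : ℕ) (N : ℝ × ℝ → ℝ) : Prop :=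
  IsNormOn N ∧ ∃ r > (0 : ℝ), ∃ θ : ℝ,
    {x : ℝ × ℝ | N x ≤ 1} = convexHull ℝ (Set.range (polyVerts lam r θ))

/-- φ is a norming functional for x with respect to the norm N: the dual norm of φ is
at most one (‖φ‖ ≤ 1, which together with φ x = N x = 1 for the unit vectors considered
gives ‖φ‖ = 1) and φ x = N x. -/
def IsNormingN (N : ℝ × ℝ → ℝ) (φ : (ℝ × ℝ) →ₗ[ℝ] ℝ) (x : ℝ × ℝ) : Prop :=
  (∀ y : ℝ × ℝ, |φ y| ≤ N y) ∧ φ x = N x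

/-- A unit vector (w.r.t. N) of the first type: an interior point of a flattening of the
unit circle of N. -/
def FirstTypeN (N : ℝ × ℝ → ℝ) (x : ℝ × ℝ) : Prop :=
  N x = 1 ∧ ∃ u v : ℝ × ℝ, u ≠ v ∧ N u = 1 ∧ N v = 1 ∧
    x ∈ openSegment ℝ u v ∧ ∀ z ∈ segment ℝ u v, N z = 1

/-- A unit vector (w.r.t. N) of the zero type: not of the first type. -/
def ZeroTypeN (N : ℝ × ℝ → ℝ) (x : ℝ × ℝ) : Prop :=
  N x = 1 ∧ ¬ FirstTypeN N x

/-- The Fermat–Torricelli set of a finite tuple of points of ℝ² with respect to the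
norm N. -/
def ftSetN (N : ℝ × ℝ → ℝ) {n : ℕ} (x : Fin n → ℝ × ℝ) : Set (ℝ × ℝ) :=
  {p | ∀ q : ℝ × ℝ, ∑ i, N (p - x i) ≤ ∑ i, N (q - x i)}

lemma aux_cos_not_integral (lam : ℕ) (hlam : 2 ≤ lam) (x : ℝ) (hx : 2 * lam * x = π)
    (h : IsIntegral ℤ (Real.cos x)) : False := by
  have hl : (2 : ℝ) ≤ lam := by exact_mod_cast hlam
  have hxpos : 0 < x := by
    by_contra hneg
    have := Real.pi_pos
    nlinarith
  have hxlt : x < π / 2 := by nlinarith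
  have hc0 : 0 < Real.cos x := Real.cos_pos_of_mem_Ioo ⟨by linarith, hxlt⟩
  have hc1 : Real.cos x < 1 := by
    have := Real.cos_lt_cos_of_nonneg_of_le_pi (x := 0) (y := x) le_rfl (by linarith) hxpos
    simpa using this
  set ζ : ℂ := Complex.exp (x * Complex.I) with hζ
  have hζpow : ζ ^ (4 * lam) = 1 := by
    rw [hζ, ← Complex.exp_nat_mul, Complex.exp_eq_one_iff]
    refine ⟨1, ?_⟩
    have : (2 * lam * x : ℂ) = π := by exact_mod_cast hx
    push_cast
    linear_combination 2 * Complex.I * this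
  have hζint : IsIntegral ℚ ζ := by
    refine IsIntegral.of_pow (n := 4 * lam) (by omega) ?_
    rw [hζpow]; exact isIntegral_one
  let K := IntermediateField.adjoin ℚ {ζ}
  let _ : NumberField K := {
    to_charZero := inferInstance
    to_finiteDimensional := IntermediateField.adjoin.finiteDimensional hζint }
  let g : K := ⟨ζ, IntermediateField.mem_adjoin_simple_self ℚ ζ⟩
  let z : K := (g + g⁻¹) / 2
  have hgpow : g ^ (4 * lam) = 1 := by
    apply Subtype.ext
    simpa [g] using hζpow
  have hz : (z : ℂ) = ((Real.cos x : ℝ) : ℂ) := by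
    have : (z : ℂ) = (ζ + ζ⁻¹) / 2 := rfl
    rw [this, hζ, ← Complex.exp_neg, Complex.ofReal_cos, Complex.cos]
    ring_nf
  have hzint : IsIntegral ℤ z := by
    have h1 : IsIntegral ℤ ((Real.cos x : ℝ) : ℂ) := by
      have := h.map (Algebra.ofId ℝ ℂ |>.restrictScalars ℤ)
      exact this
    rw [← hz] at h1
    exact (isIntegral_algebraMap_iff (A := K) (B := ℂ) (R := ℤ)
      (algebraMap K ℂ).injective).mp h1
  have hz0 : z ≠ 0 := by
    intro h0
    rw [h0] at hz
    have : Real.cos x = 0 := Complex.ofReal_injective hz.symm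
    linarith
  obtain ⟨n, hn, hzn⟩ := NumberField.Embeddings.pow_eq_one_of_norm_le_one K ℂ hz0 hzint (by
    intro ψ
    have hg1 : ‖ψ g‖ = 1 := by
      have h0 : ψ g ^ (4 * lam) = 1 := by rw [← map_pow, hgpow, map_one]
      exact Complex.norm_eq_one_of_pow_eq_one h0 (by omega)
    have : ψ z = (ψ g + (ψ g)⁻¹) / 2 := by
      have h2 : ψ 2 = 2 := map_ofNat ψ 2
      simp only [z, map_div₀, map_add, map_inv₀, h2]
    rw [this, norm_div]
    have := norm_add_le (ψ g) (ψ g)⁻¹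
    rw [norm_inv, hg1] at this
    norm_num at this ⊢
    linarith)
  have h1 : (Real.cos x) ^ n = 1 := by
    have := congrArg (fun t : K => (t : ℂ)) hzn
    simp only [SubmonoidClass.coe_pow, hz] at this
    apply Complex.ofReal_injective
    rw [Complex.ofReal_pow, this]
    rfl
  have := pow_lt_one₀ hc0.le hc1 hn.ne'
  linarith

lemma aux_cos_odd_le (lam : ℕ) (hlam : 2 ≤ lam) (x : ℝ) (hx : 2 * lam * x = π) (j : ℤ) :
    Real.cos ((2 * j + 1) * x) ≤ Real.cos x := by
  have hl : (2 : ℝ) ≤ lam := by exact_mod_cast hlam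
  have hxpos : 0 < x := by
    by_contra hneg
    have := Real.pi_pos
    nlinarith
  have key : Real.cos x - Real.cos ((2 * j + 1) * x)
      = 2 * (Real.sin ((j + 1) * x) * Real.sin (j * x)) := by
    rw [Real.cos_sub_cos, show (x + (2 * j + 1) * x) / 2 = (j + 1) * x by ring,
      show (x - (2 * j + 1) * x) / 2 = -(j * x) by ring, Real.sin_neg]
    ring
  have hL : (0 : ℤ) < 2 * lam := by omega
  set ρ := j % (2 * lam) with hρ
  set l := j / (2 * lam) with hl'
  have hj : j = ρ + l * (2 * lam) := by
    rw [hρ, hl', mul_comm (j / (2 * (lam : ℤ)))]; exact (Int.emod_add_mul_ediv j (2 * lam)).symm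
  have hjr : (j : ℝ) = ρ + l * (2 * lam) := by exact_mod_cast hj
  have hρ0 : (0 : ℝ) ≤ ρ := by exact_mod_cast Int.emod_nonneg j hL.ne'
  have hρ1 : (ρ : ℝ) + 1 ≤ 2 * lam := by exact_mod_cast Int.emod_lt_of_pos j hL
  have e1 : (j + 1) * x = (ρ + 1) * x + l * π := by rw [hjr, ← hx]; ring
  have e2 : j * x = ρ * x + l * π := by rw [hjr, ← hx]; ring
  have s1 : 0 ≤ Real.sin ((ρ + 1) * x) :=
    Real.sin_nonneg_of_nonneg_of_le_pi (by positivity) (by rw [← hx]; gcongr)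
  have s2 : 0 ≤ Real.sin (ρ * x) :=
    Real.sin_nonneg_of_nonneg_of_le_pi (by positivity) (by rw [← hx]; gcongr; linarith)
  have hsq : ((-1 : ℝ) ^ l) * ((-1 : ℝ) ^ l) = 1 := by
    rw [← mul_zpow]; norm_num
  have : Real.sin ((j + 1) * x) * Real.sin (j * x)
      = Real.sin ((ρ + 1) * x) * Real.sin (ρ * x) := by
    rw [e1, e2, Real.sin_add_int_mul_pi, Real.sin_add_int_mul_pi]
    linear_combination (Real.sin ((ρ + 1) * x) * Real.sin (ρ * x)) * hsq
  have := mul_nonneg s1 s2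
  linarith

lemma aux_face (S : Set (ℝ × ℝ)) (φ : (ℝ × ℝ) →ₗ[ℝ] ℝ) (hS : ∀ s ∈ S, φ s ≤ 1)
    (y : ℝ × ℝ) (hy : y ∈ convexHull ℝ S) (h1 : φ y = 1) :
    y ∈ convexHull ℝ {s ∈ S | φ s = 1} := by
  let F := convexHull ℝ {s ∈ S | φ s = 1}
  have hconv : Convex ℝ {y | φ y < 1 ∨ (φ y = 1 ∧ y ∈ F)} := by
    intro a ha b hb s t hs ht hst
    simp only [Set.mem_ofPred_eq, map_add, map_smul, smul_eq_mul] at *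
    rcases hs.eq_or_lt with rfl | hs'
    · have : t = 1 := by linarith
      subst this
      simpa using hb
    rcases ht.eq_or_lt with rfl | ht'
    · have : s = 1 := by linarith
      subst this
      simpa using ha
    have ha1 : φ a ≤ 1 := by rcases ha with h | h <;> linarith
    have hb1 : φ b ≤ 1 := by rcases hb with h | h <;> linarith
    rcases ha with ha | ha
    · left; nlinarith
    rcases hb with hb | hb
    · left; nlinarith
    right
    exact ⟨by rw [ha.1, hb.1]; linarith, convex_convexHull ℝ _ ha.2 hb.2 hs ht hst⟩
  have hsub : S ⊆ {y | φ y < 1 ∨ (φ y = 1 ∧ y ∈ F)} := by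
    intro s hs
    rcases (hS s hs).lt_or_eq with h | h
    · exact Or.inl h
    · exact Or.inr ⟨h, subset_convexHull ℝ _ ⟨hs, h⟩⟩
  rcases convexHull_min hsub hconv hy with h | h
  · exact absurd h1 h.ne
  · exact h.2

/-- Vertices indexed by all integers. -/
noncomputable def auxV (r θ x : ℝ) (k : ℤ) : ℝ × ℝ :=
  (r * Real.cos (θ + 2 * k * x), r * Real.sin (θ + 2 * k * x))

lemma auxV_period (r θ x : ℝ) (lam : ℕ) (hx : 2 * lam * x = π) (i j m : ℤ)
    (h : i = j + m * (2 * lam)) : auxV r θ x i = auxV r θ x j := by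
  have : θ + 2 * i * x = θ + 2 * j * x + m * (2 * π) := by
    rw [h, ← hx]; push_cast; ring
  simp only [auxV, this, Real.cos_add_int_mul_two_pi, Real.sin_add_int_mul_two_pi]

lemma aux_range (lam : ℕ) (hlam : 2 ≤ lam) (r θ x : ℝ) (hx : 2 * lam * x = π) :
    Set.range (polyVerts lam r θ) = Set.range (auxV r θ x) := by
  have hl : (lam : ℝ) ≠ 0 := by positivity
  have e : ∀ k : Fin (2 * lam), polyVerts lam r θ k = auxV r θ x ((k : ℕ) : ℤ) := by
    intro k
    have : θ + (k : ℕ) * π / lam = θ + 2 * (((k : ℕ) : ℤ) : ℝ) * x := by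
      rw [← hx]; push_cast; field_simp
    simp only [polyVerts, auxV, this]
  have hL : (0 : ℤ) < 2 * lam := by omega
  ext y
  constructor
  · rintro ⟨k, rfl⟩
    exact ⟨_, (e k).symm⟩
  · rintro ⟨k, rfl⟩
    have h0 := Int.emod_nonneg k hL.ne'
    have h1 := Int.emod_lt_of_pos k hL
    refine ⟨⟨(k % (2 * lam)).toNat, by omega⟩, ?_⟩
    rw [e]
    refine (auxV_period r θ x lam hx _ _ (k / (2 * lam)) ?_).symm
    rw [Int.toNat_of_nonneg h0, mul_comm (k / (2 * (lam : ℤ)))]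
    exact (Int.emod_add_mul_ediv k (2 * lam)).symm

lemma aux_edge (lam : ℕ) (hlam : 2 ≤ lam) (r θ x : ℝ) (hr : 0 < r) (hx : 2 * lam * x = π)
    (φ : (ℝ × ℝ) →ₗ[ℝ] ℝ) (hle : ∀ k, φ (auxV r θ x k) ≤ 1)
    (i j : ℤ) (hi : φ (auxV r θ x i) = 1) (hj : φ (auxV r θ x j) = 1)
    (hij : auxV r θ x i ≠ auxV r θ x j) :
    ∃ n : ℤ, ∀ k : ℤ, φ (auxV r θ x k) * Real.cos x = Real.cos ((2 * k - (2 * n + 1)) * x) := by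
  obtain ⟨A, ψ, hA, hf⟩ : ∃ A ψ : ℝ, 0 ≤ A ∧
      ∀ k, φ (auxV r θ x k) = A * Real.cos (θ + 2 * k * x - ψ) := by
    let w : ℂ := ⟨φ (1, 0), φ (0, 1)⟩
    refine ⟨r * ‖w‖, Complex.arg w, by positivity, fun k => ?_⟩
    have h1 : ‖w‖ * Real.cos (Complex.arg w) = φ (1, 0) := Complex.norm_mul_cos_arg w
    have h2 : ‖w‖ * Real.sin (Complex.arg w) = φ (0, 1) := Complex.norm_mul_sin_arg w
    have : auxV r θ x k = (r * Real.cos (θ + 2 * k * x)) • ((1, 0) : ℝ × ℝ)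
        + (r * Real.sin (θ + 2 * k * x)) • ((0, 1) : ℝ × ℝ) := by
      simp [auxV]
    rw [this, map_add, map_smul, map_smul, ← h1, ← h2, Real.cos_sub]
    simp only [smul_eq_mul]
    ring
  have hA0 : A ≠ 0 := by
    rintro rfl
    rw [hf] at hi; simp at hi
  have hcc : Real.cos (θ + 2 * i * x - ψ) = Real.cos (θ + 2 * j * x - ψ) := by
    apply mul_left_cancel₀ hA0
    rw [← hf, ← hf, hi, hj]
  obtain ⟨m, hm | hm⟩ := Real.cos_eq_cos_iff.mp hcc
  · exfalso
    apply hij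
    have : θ + 2 * j * x = θ + 2 * i * x + m * (2 * π) := by linarith
    simp only [auxV, this, Real.cos_add_int_mul_two_pi, Real.sin_add_int_mul_two_pi]
  · have hψ : θ - ψ = (2 * lam * m - i - j) * x := by
      linear_combination hm / 2 - m * hx
    obtain ⟨n, hn⟩ := Int.even_or_odd' (i + j - 2 * lam * m)
    rcases hn with hn | hn
    · exfalso
      have hnr : (i + j - 2 * lam * m : ℝ) = 2 * n := by exact_mod_cast hn
      have hfk : ∀ k, φ (auxV r θ x k) = A * Real.cos (2 * k * x - 2 * n * x) := by
        intro k
        rw [hf]; congr 2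
        linear_combination hψ - x * hnr
      have hAle : A ≤ 1 := by
        have := hle n
        rw [hfk] at this; simpa using this
      have key : ∀ k, φ (auxV r θ x k) = 1 → auxV r θ x k = auxV r θ x n := by
        intro k hk
        rw [hfk] at hk
        have h1 := Real.cos_le_one (2 * k * x - 2 * n * x)
        have h2 : Real.cos (2 * k * x - 2 * n * x) = 1 := by
          have : 0 < A := lt_of_le_of_ne hA hA0.symm
          nlinarith
        obtain ⟨p, hp⟩ := (Real.cos_eq_one_iff _).mp h2
        have : θ + 2 * k * x = θ + 2 * n * x + p * (2 * π) := by linarith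
        simp only [auxV, this, Real.cos_add_int_mul_two_pi, Real.sin_add_int_mul_two_pi]
      exact hij ((key i hi).trans (key j hj).symm)
    · have hnr : (i + j - 2 * lam * m : ℝ) = 2 * n + 1 := by exact_mod_cast hn
      have hfk : ∀ k, φ (auxV r θ x k) = A * Real.cos ((2 * k - (2 * n + 1)) * x) := by
        intro k
        rw [hf]; congr 2
        linear_combination hψ - x * hnr
      have h1 : A * Real.cos x ≤ 1 := by
        have := hle n
        rw [hfk, show (2 * (n : ℝ) - (2 * n + 1)) * x = -x by ring, Real.cos_neg] at this
        exact this
      have h2 : 1 ≤ A * Real.cos x := by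
        rw [← hi, hfk]
        gcongr
        have := aux_cos_odd_le lam hlam x hx (i - n - 1)
        push_cast at this
        rwa [show (2 * ((i : ℝ) - n - 1) + 1) = 2 * i - (2 * n + 1) by ring] at this
      have h3 : A * Real.cos x = 1 := le_antisymm h1 h2
      refine ⟨n, fun k => ?_⟩
      rw [hfk]
      linear_combination (Real.cos ((2 * k - (2 * n + 1)) * x)) * h3

lemma aux_first (lam : ℕ) (hlam : 2 ≤ lam) (r θ x : ℝ) (hr : 0 < r) (hx : 2 * lam * x = π)
    (N : ℝ × ℝ → ℝ) (hball : {y | N y ≤ 1} = convexHull ℝ (Set.range (auxV r θ x)))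
    (y : ℝ × ℝ) (φ : (ℝ × ℝ) →ₗ[ℝ] ℝ) (hy : FirstTypeN N y) (hφ : IsNormingN N φ y) :
    ∃ n : ℤ, ∀ k : ℤ, φ (auxV r θ x k) * Real.cos x = Real.cos ((2 * k - (2 * n + 1)) * x) := by
  obtain ⟨hy1, u, v, huv, hu, hv, ⟨a, b, ha, hb, hab, rfl⟩, -⟩ := hy
  obtain ⟨hb1, hφy⟩ := hφ
  have hu1 : φ u ≤ 1 := by have := hb1 u; rw [hu] at this; exact (abs_le.mp this).2
  have hv1 : φ v ≤ 1 := by have := hb1 v; rw [hv] at this; exact (abs_le.mp this).2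
  rw [hy1] at hφy
  simp only [map_add, map_smul, smul_eq_mul] at hφy
  have hu2 : φ u = 1 := by
    apply le_antisymm hu1
    nlinarith
  have hv2 : φ v = 1 := by
    apply le_antisymm hv1
    nlinarith
  have hle : ∀ k, φ (auxV r θ x k) ≤ 1 := by
    intro k
    have : auxV r θ x k ∈ {y | N y ≤ 1} := by
      rw [hball]; exact subset_convexHull ℝ _ ⟨k, rfl⟩
    exact (le_abs_self _).trans ((hb1 _).trans this)
  have hle' : ∀ s ∈ Set.range (auxV r θ x), φ s ≤ 1 := by
    rintro _ ⟨k, rfl⟩; exact hle k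
  have hum : u ∈ convexHull ℝ (Set.range (auxV r θ x)) := by rw [← hball]; exact hu.le
  have hvm : v ∈ convexHull ℝ (Set.range (auxV r θ x)) := by rw [← hball]; exact hv.le
  have hu3 := aux_face _ φ hle' u hum hu2
  have hv3 := aux_face _ φ hle' v hvm hv2
  obtain ⟨_, ⟨i, rfl⟩, hi⟩ := convexHull_nonempty_iff.mp ⟨u, hu3⟩
  by_cases hall : ∃ j, φ (auxV r θ x j) = 1 ∧ auxV r θ x i ≠ auxV r θ x j
  · obtain ⟨j, hj, hij⟩ := hall
    exact aux_edge lam hlam r θ x hr hx φ hle i j hi hj hij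
  · exfalso
    push Not at hall
    have hsub : {s ∈ Set.range (auxV r θ x) | φ s = 1} ⊆ {auxV r θ x i} := by
      rintro _ ⟨⟨j, rfl⟩, hj⟩
      exact (hall j hj).symm
    have hu4 := convexHull_mono hsub hu3
    have hv4 := convexHull_mono hsub hv3
    rw [convexHull_singleton] at hu4 hv4
    exact huv (hu4.trans hv4.symm)

/-- If λ is not divisible by 3, a λ-normed plane does not satisfy the second
non-uniqueness condition. -/
theorem lambda_plane_no_second_condition
    (lam : ℕ) (hlam : 2 ≤ lam) (h3 : ¬ 3 ∣ lam)
    (N : ℝ × ℝ → ℝ) (hN : IsLambdaNorm lam N) :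
    ¬ ∃ (x₁ x₂ x₃ : ℝ × ℝ) (φ₁ φ₂ φ₃ : (ℝ × ℝ) →ₗ[ℝ] ℝ),
        FirstTypeN N x₁ ∧ FirstTypeN N x₂ ∧ ZeroTypeN N x₃ ∧
        IsNormingN N φ₁ x₁ ∧ IsNormingN N φ₂ x₂ ∧ IsNormingN N φ₃ x₃ ∧
        φ₁ + φ₂ + φ₃ = 0 ∧
        (∀ y : ℝ × ℝ, N y = 1 → φ₃ y = 1 → y = x₃) := by
  rintro ⟨x₁, x₂, x₃, φ₁, φ₂, φ₃, hx₁, hx₂, hx₃, hφ₁, hφ₂, hφ₃, hsum, huniq⟩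
  obtain ⟨-, r, hr, θ, hball⟩ := hN
  have hl : (2 : ℝ) ≤ lam := by exact_mod_cast hlam
  obtain ⟨x, hx⟩ : ∃ x : ℝ, 2 * lam * x = π := ⟨π / (2 * lam), by field_simp⟩
  rw [aux_range lam hlam r θ x hx] at hball
  obtain ⟨n₁, hn₁⟩ := aux_first lam hlam r θ x hr hx N hball x₁ φ₁ hx₁ hφ₁
  obtain ⟨n₂, hn₂⟩ := aux_first lam hlam r θ x hr hx N hball x₂ φ₂ hx₂ hφ₂
  have hxpos : 0 < x := by
    by_contra hneg
    have := Real.pi_pos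
    nlinarith
  have hxlt : x < π / 2 := by nlinarith
  have hc0 : 0 < Real.cos x := Real.cos_pos_of_mem_Ioo ⟨by linarith, hxlt⟩
  -- values of φ₃ at the vertices
  have hf : ∀ k : ℤ, φ₃ (auxV r θ x k) * Real.cos x
      = -(2 * Real.cos ((n₁ - n₂) * x)) * Real.cos ((2 * k - (n₁ + n₂ + 1)) * x) := by
    intro k
    have h := LinearMap.congr_fun hsum (auxV r θ x k)
    simp only [LinearMap.add_apply, LinearMap.zero_apply] at h
    have hcc := Real.cos_add_cos ((2 * k - (2 * n₁ + 1)) * x) ((2 * k - (2 * n₂ + 1)) * x)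
    rw [show ((2 * k - (2 * n₁ + 1)) * x + (2 * k - (2 * n₂ + 1)) * x) / 2
        = (2 * k - (n₁ + n₂ + 1)) * x by ring,
      show ((2 * k - (2 * n₁ + 1)) * x - (2 * k - (2 * n₂ + 1)) * x) / 2
        = -((n₁ - n₂) * x) by ring, Real.cos_neg] at hcc
    linear_combination (Real.cos x) * h - hn₁ k - hn₂ k - hcc
  have hNk : ∀ k, N (auxV r θ x k) ≤ 1 := by
    intro k
    have : auxV r θ x k ∈ {y | N y ≤ 1} := by
      rw [hball]; exact subset_convexHull ℝ _ ⟨k, rfl⟩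
    exact this
  have hle : ∀ k, φ₃ (auxV r θ x k) ≤ 1 := fun k =>
    (le_abs_self _).trans ((hφ₃.1 _).trans (hNk k))
  have heq : ∀ k, φ₃ (auxV r θ x k) = 1 → auxV r θ x k = x₃ := by
    intro k hk
    refine huniq _ (le_antisymm (hNk k) ?_) hk
    rw [← hk]
    exact (le_abs_self _).trans (hφ₃.1 _)
  have hx3m : x₃ ∈ convexHull ℝ (Set.range (auxV r θ x)) := by rw [← hball]; exact hx₃.1.le
  have hface := aux_face _ φ₃ (by rintro _ ⟨k, rfl⟩; exact hle k) x₃ hx3m (hφ₃.2.trans hx₃.1)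
  obtain ⟨_, ⟨k, rfl⟩, hk⟩ := convexHull_nonempty_iff.mp ⟨x₃, hface⟩
  obtain ⟨s, hs | hs⟩ := Int.even_or_odd' (n₁ + n₂ + 1)
  · have hsr : (n₁ + n₂ + 1 : ℝ) = 2 * s := by exact_mod_cast hs
    rw [hsr] at hf
    set D := 2 * Real.cos ((n₁ - n₂) * x) with hD
    have hk1 := hf k
    rw [hk] at hk1
    have hs1 := hf s
    have hs2 := hf (s + lam)
    rw [sub_self, zero_mul, Real.cos_zero] at hs1
    rw [show (2 * ((s + lam : ℤ) : ℝ) - 2 * s) * x = π by push_cast; linarith,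
      Real.cos_pi] at hs2
    have b1 : -D ≤ Real.cos x := by nlinarith [hle s]
    have b2 : D ≤ Real.cos x := by nlinarith [hle (s + lam)]
    have c1 := Real.cos_le_one ((2 * k - 2 * s) * x)
    have c2 := Real.neg_one_le_cos ((2 * k - 2 * s) * x)
    have hint : IsIntegral ℤ D := by
      have := Real.isIntegral_two_mul_cos_rat_mul_pi ((n₁ - n₂) / (2 * lam))
      have e : (((n₁ - n₂) / (2 * lam) : ℚ) : ℝ) * π = (n₁ - n₂) * x := by
        rw [← hx]; push_cast; field_simp
      rwa [e] at this
    have hc : Real.cos x = D ∨ Real.cos x = -D := by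
      rcases le_total 0 D with h | h
      · left; nlinarith
      · right; nlinarith
    apply aux_cos_not_integral lam hlam x hx
    rcases hc with h | h
    · rw [h]; exact hint
    · rw [h]; exact hint.neg
  · have hk' : φ₃ (auxV r θ x (n₁ + n₂ + 1 - k)) = 1 := by
      rw [← hk]
      apply mul_right_cancel₀ hc0.ne'
      rw [hf, hf, ← Real.cos_neg ((2 * (k : ℝ) - _) * x)]
      push_cast
      ring_nf
    have hV := (heq _ hk').trans (heq k hk).symm
    simp only [auxV, Prod.mk.injEq] at hV
    have h1 := mul_left_cancel₀ hr.ne' hV.1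
    have h2 := mul_left_cancel₀ hr.ne' hV.2
    have h4 : Real.cos (θ + 2 * ((n₁ + n₂ + 1 - k : ℤ) : ℝ) * x - (θ + 2 * k * x)) = 1 := by
      rw [Real.cos_sub, h1, h2]
      nlinarith [Real.sin_sq_add_cos_sq (θ + 2 * k * x)]
    obtain ⟨p, hp⟩ := (Real.cos_eq_one_iff _).mp h4
    rw [hs, ← hx] at hp
    push_cast at hp
    have h5 : (2 * s + 1 - 2 * k : ℝ) = 2 * lam * p := by
      apply mul_right_cancel₀ hxpos.ne'
      linarith
    have h6 : 2 * s + 1 - 2 * k = 2 * (lam * p) := by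
      have : 2 * s + 1 - 2 * k = 2 * lam * p := by exact_mod_cast h5
      rw [this]; ring
    omega
end

section
/- Let λ ≥ 2 be an integer and let X be a λ-normed plane. Then the Fermat–Torricelli set ft(x₁, x₂, x₃) is a singleton for every triple of points x₁, x₂, x₃ ∈ X if and only if λ is not divisible by 3. -/
open Real

/-! ### Trigonometric lemmas -/

/-- If `sin² (n b) ≤ sin² b` with `2 λ b = π`, then `n ≡ 0, ±1` modulo `2λ`. -/
lemma trigL (lam : ℕ) (hlam : 2 ≤ lam) (b : ℝ) (hb : 2 * lam * b = π) (n : ℤ)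
    (h : sin (n * b) ^ 2 ≤ sin b ^ 2) :
    ∃ z : ℤ, n = 2 * lam * z ∨ n = 2 * lam * z + 1 ∨ n = 2 * lam * z - 1 := by
  have hl : (2 : ℝ) ≤ lam := by exact_mod_cast hlam
  have hbpos : 0 < b := by
    by_contra hc
    push Not at hc
    nlinarith [Real.pi_pos]
  obtain ⟨q, m, hm0, hm1, hn⟩ : ∃ q m : ℤ, 0 ≤ m ∧ m < 2 * lam ∧ n = 2 * lam * q + m := by
    refine ⟨n / (2 * lam), n % (2 * lam), Int.emod_nonneg _ (by omega),
      Int.emod_lt_of_pos _ (by omega), ?_⟩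
    exact (Int.mul_ediv_add_emod n (2 * lam)).symm
  by_cases h0 : m = 0
  · exact ⟨q, Or.inl (by omega)⟩
  by_cases h1 : m = 1
  · exact ⟨q, Or.inr (Or.inl (by omega))⟩
  by_cases h2 : m = 2 * lam - 1
  · refine ⟨q + 1, Or.inr (Or.inr ?_)⟩
    rw [hn, h2]; ring
  exfalso
  have e : (n : ℝ) * b = m * b + q * π := by
    rw [hn, ← hb]; push_cast; ring
  have hs : sin (n * b) ^ 2 = sin (m * b) ^ 2 := by
    rw [e, Real.sin_add_int_mul_pi, mul_pow]
    have : ((-1 : ℝ) ^ q) ^ 2 = 1 := by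
      rw [← zpow_natCast, ← zpow_mul, mul_comm, zpow_mul]; simp
    rw [this, one_mul]
  rw [hs] at h
  have hm2 : (2 : ℝ) ≤ m := by exact_mod_cast (by omega : (2 : ℤ) ≤ m)
  have hm3 : (m : ℝ) + 2 ≤ 2 * lam := by exact_mod_cast (by omega : m + 2 ≤ 2 * lam)
  have p1 : 0 < sin (m * b - b) := by
    apply Real.sin_pos_of_pos_of_lt_pi <;> nlinarith
  have p2 : 0 < sin (m * b + b) := by
    apply Real.sin_pos_of_pos_of_lt_pi <;> nlinarith
  have : sin (m * b - b) * sin (m * b + b) = sin (m * b) ^ 2 - sin b ^ 2 := by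
    rw [sin_sub, sin_add]
    have := sin_sq_add_cos_sq (m * b)
    have := sin_sq_add_cos_sq b
    grind
  nlinarith [mul_pos p1 p2]

lemma zpow_sq_one (q : ℤ) : ((-1 : ℝ) ^ q) ^ 2 = 1 := by
  rw [← zpow_natCast, ← zpow_mul, mul_comm, zpow_mul]; simp

lemma sin_sq_shift (x : ℝ) (q : ℤ) : sin (x + q * π) ^ 2 = sin x ^ 2 := by
  rw [Real.sin_add_int_mul_pi, mul_pow, zpow_sq_one, one_mul]

lemma cos_sq_shift (x : ℝ) (q : ℤ) : cos (x + q * π) ^ 2 = cos x ^ 2 := by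
  rw [Real.cos_add_int_mul_pi, mul_pow, zpow_sq_one, one_mul]

lemma trigL2 (lam : ℕ) (hlam : 2 ≤ lam) (b : ℝ) (hb : 2 * lam * b = π) (n : ℤ)
    (h : sin (n * b) ^ 2 ≤ sin b ^ 2) :
    ((2 * lam : ℤ) ∣ n ∧ cos (n * b) ^ 2 = 1) ∨ cos (n * b) ^ 2 = cos b ^ 2 := by
  obtain ⟨z, hz | hz | hz⟩ := trigL lam hlam b hb n h
  · left
    refine ⟨⟨z, hz⟩, ?_⟩
    have : (n : ℝ) * b = 0 + z * π := by rw [hz, ← hb]; push_cast; ring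
    rw [this, cos_sq_shift]; simp
  · right
    have : (n : ℝ) * b = b + z * π := by rw [hz, ← hb]; push_cast; ring
    rw [this, cos_sq_shift]
  · right
    have : (n : ℝ) * b = -b + z * π := by rw [hz, ← hb]; push_cast; ring
    rw [this, cos_sq_shift, cos_neg]

lemma b_bounds (lam : ℕ) (hlam : 2 ≤ lam) (b : ℝ) (hb : 2 * lam * b = π) :
    0 < b ∧ b ≤ π / 4 ∧ 0 < sin b ∧ 0 < cos b ∧ 1 / 2 ≤ cos b ^ 2 := by
  have hl : (2 : ℝ) ≤ lam := by exact_mod_cast hlam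
  have hpi := Real.pi_pos
  have hbpos : 0 < b := by
    by_contra hc
    push Not at hc
    nlinarith
  have hb4 : b ≤ π / 4 := by nlinarith
  refine ⟨hbpos, hb4, Real.sin_pos_of_pos_of_lt_pi hbpos (by linarith),
    Real.cos_pos_of_mem_Ioo ⟨by linarith, by linarith⟩, ?_⟩
  have : 0 ≤ cos (2 * b) := Real.cos_nonneg_of_mem_Icc ⟨by linarith, by linarith⟩
  rw [cos_two_mul] at this
  linarith

lemma trigK (lam : ℕ) (hlam : 2 ≤ lam) (b : ℝ) (hb : 2 * lam * b = π) (l : ℤ) :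
    4 * cos (l * b) ^ 2 ≠ cos b ^ 2 := by
  intro h
  obtain ⟨_, _, hs, hc, hc2⟩ := b_bounds lam hlam b hb
  have hX : cos b ^ 2 < 1 := by nlinarith [sin_sq_add_cos_sq b]
  have h3 : cos ((3 * l : ℤ) * b) ^ 2 = cos b ^ 2 * (3 - cos b ^ 2) ^ 2 / 4 := by
    have : ((3 * l : ℤ) : ℝ) * b = 3 * (l * b) := by push_cast; ring
    rw [this, cos_three_mul, ← h]
    ring
  have lo : cos b ^ 2 < cos ((3 * l : ℤ) * b) ^ 2 := by
    rw [h3]; generalize cos b ^ 2 = X at *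
    have : 4 < (3 - X) ^ 2 := by nlinarith
    nlinarith
  have hi : cos ((3 * l : ℤ) * b) ^ 2 < 1 := by
    rw [h3]; generalize cos b ^ 2 = X at *
    nlinarith [mul_pos (sub_pos.2 hX) (sub_pos.2 hX), mul_pos (mul_pos (sub_pos.2 hX) (sub_pos.2 hX)) (by linarith : (0:ℝ) < 4 - X)]
  rcases trigL2 lam hlam b hb (3 * l)
    (by nlinarith [sin_sq_add_cos_sq b, sin_sq_add_cos_sq ((3 * l : ℤ) * b)]) with h | h
  · linarith [h.2]
  · linarith

lemma trigM (lam : ℕ) (hlam : 2 ≤ lam) (b : ℝ) (hb : 2 * lam * b = π) (l : ℤ)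
    (h : cos (2 * (l * b)) = -1 / 2) : 3 ∣ lam := by
  have h1 : cos (2 * (l * b)) = cos (2 * (π / 3)) := by
    rw [h, cos_two_mul, cos_pi_div_three]; norm_num
  have hl : (2 : ℝ) ≤ lam := by exact_mod_cast hlam
  have hbb : b = π / (2 * lam) := by rw [← hb]; field_simp
  have hpi := Real.pi_pos
  rw [Real.cos_eq_cos_iff] at h1
  obtain ⟨k, hk | hk⟩ := h1
  · rw [hbb] at hk
    field_simp at hk
    have : (2 * lam : ℤ) = 3 * (2 * k * lam + l) := by
      exact_mod_cast (by linarith : (2 * lam : ℝ) = 3 * (2 * k * lam + l))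
    omega
  · rw [hbb] at hk
    field_simp at hk
    have : (2 * lam : ℤ) = 3 * (2 * k * lam - l) := by
      exact_mod_cast (by linarith : (2 * lam : ℝ) = 3 * (2 * k * lam - l))
    omega

lemma trig_none (lam : ℕ) (hlam : 2 ≤ lam) (b : ℝ) (hb : 2 * lam * b = π)
    (g : ℝ) (k₁ k₂ k₃ : ℤ)
    (hC : cos (g + 2 * k₁ * b) + cos (g + 2 * k₂ * b) + cos (g + 2 * k₃ * b) = 0)
    (hS : sin (g + 2 * k₁ * b) + sin (g + 2 * k₂ * b) + sin (g + 2 * k₃ * b) = 0) :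
    3 ∣ lam := by
  apply trigM lam hlam b hb (k₁ - k₂)
  have : 2 * ((k₁ - k₂ : ℤ) * b) = (g + 2 * k₁ * b) - (g + 2 * k₂ * b) := by push_cast; ring
  rw [this, cos_sub]
  have := sin_sq_add_cos_sq (g + 2 * k₁ * b)
  have := sin_sq_add_cos_sq (g + 2 * k₂ * b)
  have := sin_sq_add_cos_sq (g + 2 * k₃ * b)
  grind

/-- exactly one edge: the first one -/
lemma trig_one (lam : ℕ) (hlam : 2 ≤ lam) (b : ℝ) (hb : 2 * lam * b = π)
    (g : ℝ) (k₁ k₂ k₃ : ℤ)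
    (hE : sin (g + 2 * k₁ * b + b) = 0 ∨ sin (g + 2 * k₁ * b - b) = 0)
    (hC : cos (g + 2 * k₁ * b) + cos (g + 2 * k₂ * b) + cos (g + 2 * k₃ * b) = 0)
    (hS : (sin (g + 2 * k₂ * b) + sin (g + 2 * k₃ * b)) ^ 2 ≤ sin b ^ 2) :
    3 ∣ lam := by
  obtain ⟨_, _, hs, hc, hc2⟩ := b_bounds lam hlam b hb
  have hg : ∃ z : ℤ, g + 2 * k₁ * b = z * b ∧ cos (g + 2 * k₁ * b) ^ 2 = cos b ^ 2 := by
    rcases hE with h | h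
    · obtain ⟨z, hz⟩ := Real.sin_eq_zero_iff.1 h
      refine ⟨2 * lam * z - 1, ?_, ?_⟩
      · push_cast; linear_combination (z : ℝ) * (-hb) - hz
      · have : g + 2 * k₁ * b = -b + z * π := by linarith
        rw [this, cos_sq_shift, cos_neg]
    · obtain ⟨z, hz⟩ := Real.sin_eq_zero_iff.1 h
      refine ⟨2 * lam * z + 1, ?_, ?_⟩
      · push_cast; linear_combination (z : ℝ) * (-hb) - hz
      · have : g + 2 * k₁ * b = b + z * π := by linarith
        rw [this, cos_sq_shift]
  obtain ⟨z, hz, hC1⟩ := hg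
  set n : ℤ := z + k₂ + k₃ - 2 * k₁ with hn
  set l : ℤ := k₂ - k₃ with hl
  have e2 : g + 2 * k₂ * b = n * b + l * b := by
    rw [hn, hl]; push_cast; linear_combination hz
  have e3 : g + 2 * k₃ * b = n * b - l * b := by
    rw [hn, hl]; push_cast; linear_combination hz
  have hCC : 4 * cos (l * b) ^ 2 * cos (n * b) ^ 2 = cos b ^ 2 := by
    rw [← hC1]
    have : cos (g + 2 * k₁ * b) = - (2 * cos (l * b) * cos (n * b)) := by
      rw [e2, e3, cos_add (n * b), cos_sub (n * b)] at hC; linarith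
    rw [this]; ring
  have hSS : 4 * cos (l * b) ^ 2 * sin (n * b) ^ 2 ≤ sin b ^ 2 := by
    rw [e2, e3, sin_add (n * b), sin_sub (n * b)] at hS
    nlinarith
  have i1 := sin_sq_add_cos_sq b
  have i2 := sin_sq_add_cos_sq (n * b)
  have hQ : 4 * cos (l * b) ^ 2 ≤ 1 := by nlinarith
  have hsn : sin (n * b) ^ 2 ≤ sin b ^ 2 := by nlinarith [sq_nonneg (cos (n * b))]
  rcases trigL2 lam hlam b hb n hsn with h | h
  · exact absurd (by rw [h.2, mul_one] at hCC; exact hCC) (trigK lam hlam b hb l)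
  · rw [h] at hCC
    apply trigM lam hlam b hb l
    rw [cos_two_mul]
    have : 4 * cos (l * b) ^ 2 = 1 := by
      have hp : 0 < cos b ^ 2 := by positivity
      nlinarith
    linarith

/-- at least two edges: the first two -/
lemma trig_two (lam : ℕ) (hlam : 2 ≤ lam) (b : ℝ) (hb : 2 * lam * b = π)
    (g : ℝ) (k₁ k₂ k₃ : ℤ)
    (hC1 : cos (g + 2 * k₁ * b) ^ 2 = cos b ^ 2)
    (hC2 : cos (g + 2 * k₂ * b) ^ 2 = cos b ^ 2)
    (hC : cos (g + 2 * k₁ * b) + cos (g + 2 * k₂ * b) + cos (g + 2 * k₃ * b) = 0)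
    (hS : sin (g + 2 * k₃ * b) ^ 2 = sin b ^ 2 ∨
      sin (g + 2 * k₃ * b) ^ 2 ≤ (sin (g + 2 * k₁ * b) + sin (g + 2 * k₂ * b)) ^ 2) :
    3 ∣ lam := by
  obtain ⟨hb0, _, hs, hc, hc2⟩ := b_bounds lam hlam b hb
  have i1 := sin_sq_add_cos_sq b
  have i2 := sin_sq_add_cos_sq (g + 2 * k₁ * b)
  have i3 := sin_sq_add_cos_sq (g + 2 * k₂ * b)
  have i4 := sin_sq_add_cos_sq (g + 2 * k₃ * b)
  have hC3 : cos (g + 2 * k₃ * b) = 0 := by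
    rcases sq_eq_sq_iff_eq_or_eq_neg.1 (hC1.trans hC2.symm) with h | h
    · nlinarith [sq_nonneg (sin (g + 2 * k₃ * b))]
    · linarith
  rw [hC3] at i4
  have h4 : 1 ≤ 4 * sin b ^ 2 := by
    rcases hS with h | h
    · nlinarith
    · nlinarith [sq_nonneg (sin (g + 2 * k₁ * b) - sin (g + 2 * k₂ * b))]
  by_cases h2 : lam = 2
  · exfalso
    have e : 2 * (g + 2 * k₁ * b) = 2 * (g + 2 * k₃ * b) + (k₁ - k₃ : ℤ) * π := by
      rw [← hb, h2]; push_cast; ring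
    have hh : cos (2 * (g + 2 * k₁ * b)) ^ 2 = 1 := by
      rw [e, cos_sq_shift, cos_two_mul, hC3]; norm_num
    have hbb : cos (2 * b) = 0 := by
      rw [← cos_pi_div_two, ← hb, h2]; congr 1; push_cast; ring
    rw [cos_two_mul] at hbb
    rw [cos_two_mul, hC1, hbb] at hh
    norm_num at hh
  by_cases h3 : lam = 3
  · exact ⟨1, by omega⟩
  exfalso
  have hl : (4 : ℝ) ≤ lam := by exact_mod_cast (by omega : 4 ≤ lam)
  have hpi := Real.pi_pos
  have hlt : sin b < sin (π / 6) := by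
    apply Real.sin_lt_sin_of_lt_of_le_pi_div_two <;> nlinarith
  rw [sin_pi_div_six] at hlt
  nlinarith

lemma edge_sq (b x : ℝ) (h : sin (x + b) = 0 ∨ sin (x - b) = 0) :
    cos x ^ 2 = cos b ^ 2 ∧ sin x ^ 2 = sin b ^ 2 := by
  rcases h with h | h
  · obtain ⟨z, hz⟩ := Real.sin_eq_zero_iff.1 h
    have : x = -b + z * π := by linarith
    rw [this, cos_sq_shift, sin_sq_shift, cos_neg, sin_neg]
    exact ⟨rfl, by ring⟩
  · obtain ⟨z, hz⟩ := Real.sin_eq_zero_iff.1 h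
    have : x = b + z * π := by linarith
    rw [this, cos_sq_shift, sin_sq_shift]
    exact ⟨rfl, rfl⟩

/-- Combination of the trigonometric case distinction. -/
lemma trig_main (lam : ℕ) (hlam : 2 ≤ lam) (b : ℝ) (hb : 2 * lam * b = π)
    (g : ℝ) (k₁ k₂ k₃ : ℤ) (t₁ t₂ t₃ : ℝ)
    (h1 : t₁ = sin (g + 2 * k₁ * b) ∨ ((sin (g + 2 * k₁ * b + b) = 0 ∨
      sin (g + 2 * k₁ * b - b) = 0) ∧ t₁ = - sin (g + 2 * k₁ * b)))
    (h2 : t₂ = sin (g + 2 * k₂ * b) ∨ ((sin (g + 2 * k₂ * b + b) = 0 ∨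
      sin (g + 2 * k₂ * b - b) = 0) ∧ t₂ = - sin (g + 2 * k₂ * b)))
    (h3 : t₃ = sin (g + 2 * k₃ * b) ∨ ((sin (g + 2 * k₃ * b + b) = 0 ∨
      sin (g + 2 * k₃ * b - b) = 0) ∧ t₃ = - sin (g + 2 * k₃ * b)))
    (hC : cos (g + 2 * k₁ * b) + cos (g + 2 * k₂ * b) + cos (g + 2 * k₃ * b) = 0)
    (hS : 0 ≤ sin (g + 2 * k₁ * b) + sin (g + 2 * k₂ * b) + sin (g + 2 * k₃ * b))
    (hT : t₁ + t₂ + t₃ ≤ 0) : 3 ∣ lam := by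
  rcases h1 with h1 | ⟨e1, h1⟩ <;> rcases h2 with h2 | ⟨e2, h2⟩ <;>
    rcases h3 with h3 | ⟨e3, h3⟩
  · exact trig_none lam hlam b hb g k₁ k₂ k₃ hC (by linarith)
  · refine trig_one lam hlam b hb g k₃ k₁ k₂ e3 (by linarith) ?_
    rw [← (edge_sq b _ e3).2]
    exact sq_le_sq' (by linarith) (by linarith)
  · refine trig_one lam hlam b hb g k₂ k₁ k₃ e2 (by linarith) ?_
    rw [← (edge_sq b _ e2).2]
    exact sq_le_sq' (by linarith) (by linarith)
  · refine trig_two lam hlam b hb g k₂ k₃ k₁ (edge_sq b _ e2).1 (edge_sq b _ e3).1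
      (by linarith) (Or.inr ?_)
    exact sq_le_sq' (by linarith) (by linarith)
  · refine trig_one lam hlam b hb g k₁ k₂ k₃ e1 (by linarith) ?_
    rw [← (edge_sq b _ e1).2]
    exact sq_le_sq' (by linarith) (by linarith)
  · refine trig_two lam hlam b hb g k₁ k₃ k₂ (edge_sq b _ e1).1 (edge_sq b _ e3).1
      (by linarith) (Or.inr ?_)
    exact sq_le_sq' (by linarith) (by linarith)
  · refine trig_two lam hlam b hb g k₁ k₂ k₃ (edge_sq b _ e1).1 (edge_sq b _ e2).1
      (by linarith) (Or.inr ?_)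
    exact sq_le_sq' (by linarith) (by linarith)
  · exact trig_two lam hlam b hb g k₁ k₂ k₃ (edge_sq b _ e1).1 (edge_sq b _ e2).1
      (by linarith) (Or.inl (edge_sq b _ e3).2)

/-- The functionals given by the edges of the unit ball. -/
noncomputable def ff (c a b : ℝ) (k : ℤ) (x : ℝ × ℝ) : ℝ :=
  c * (x.1 * cos (a + 2 * k * b) + x.2 * sin (a + 2 * k * b))

lemma ff_add (c a b : ℝ) (k : ℤ) (x y : ℝ × ℝ) :
    ff c a b k (x + y) = ff c a b k x + ff c a b k y := by
  simp [ff]; ring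

lemma ff_sub (c a b : ℝ) (k : ℤ) (x y : ℝ × ℝ) :
    ff c a b k (x - y) = ff c a b k x - ff c a b k y := by
  simp [ff]; ring

lemma ff_smul (c a b : ℝ) (k : ℤ) (t : ℝ) (x : ℝ × ℝ) :
    ff c a b k (t • x) = t * ff c a b k x := by
  simp [ff]; ring

lemma ff_cont (c a b : ℝ) (k : ℤ) : Continuous (ff c a b k) := by
  unfold ff; fun_prop

lemma lamNorm_nonneg {N : ℝ × ℝ → ℝ} (h : IsNormOn N) (x : ℝ × ℝ) : 0 ≤ N x := by
  have h0 : N 0 = 0 := by have := h.2.1 0 0; simpa using this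
  have h1 : N (-x) = N x := by have := h.2.1 (-1) x; simpa using this
  have := h.1 x (-x)
  rw [add_neg_cancel, h0, h1] at this
  linarith

lemma polar (x : ℝ × ℝ) : ∃ ρ w : ℝ, 0 ≤ ρ ∧ x = (ρ * cos w, ρ * sin w) := by
  refine ⟨‖(⟨x.1, x.2⟩ : ℂ)‖, Complex.arg ⟨x.1, x.2⟩, norm_nonneg _, ?_⟩
  ext
  · simp [Complex.norm_mul_cos_arg]
  · simp [Complex.norm_mul_sin_arg]

lemma ff_polar (c a b : ℝ) (k : ℤ) (ρ w : ℝ) :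
    ff c a b k (ρ * cos w, ρ * sin w) = c * ρ * cos (a - w + 2 * k * b) := by
  have : a - w + 2 * k * b = (a + 2 * k * b) - w := by ring
  rw [this, cos_sub]
  simp only [ff]
  ring

lemma ff_period (lam : ℕ) (c a b : ℝ) (hb : 2 * lam * b = π) (k z : ℤ) (x : ℝ × ℝ) :
    ff c a b (k + 2 * lam * z) x = ff c a b k x := by
  have : a + 2 * ((k + 2 * lam * z : ℤ) : ℝ) * b = a + 2 * k * b + z * (2 * π) := by
    rw [← hb]; push_cast; ring
  simp only [ff, this, cos_add_int_mul_two_pi, sin_add_int_mul_two_pi]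

lemma vert_mem (lam : ℕ) (hlam : 2 ≤ lam) (b : ℝ) (hb : 2 * lam * b = π) (r θ : ℝ) (k : ℤ) :
    (r * cos (θ + 2 * k * b), r * sin (θ + 2 * k * b)) ∈ Set.range (polyVerts lam r θ) := by
  have h1 : 0 ≤ k % (2 * lam) := Int.emod_nonneg _ (by omega)
  have h2 : k % (2 * lam) < 2 * lam := Int.emod_lt_of_pos _ (by omega)
  have h3 := Int.mul_ediv_add_emod k (2 * lam)
  refine ⟨⟨(k % (2 * lam)).toNat, by omega⟩, ?_⟩
  have hl : (2 : ℝ) ≤ lam := by exact_mod_cast hlam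
  have h4 : (((k % (2 * lam)).toNat : ℕ) : ℝ) = (k : ℝ) - 2 * lam * ((k / (2 * lam) : ℤ) : ℝ) := by
    have : (((k % (2 * lam)).toNat : ℕ) : ℤ) = k - 2 * lam * (k / (2 * lam)) := by omega
    exact_mod_cast this
  have h5 : θ + 2 * k * b = θ + (((k % (2 * lam)).toNat : ℕ) : ℝ) * π / lam
      + ((k / (2 * lam) : ℤ) : ℝ) * (2 * π) := by
    rw [h4, ← hb]; field_simp; ring
  rw [h5, cos_add_int_mul_two_pi, sin_add_int_mul_two_pi]
  simp [polyVerts]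

lemma repr_norm (lam : ℕ) (hlam : 2 ≤ lam) (b : ℝ) (hb : 2 * lam * b = π)
    (N : ℝ × ℝ → ℝ) (hN : IsLambdaNorm lam N) :
    ∃ c a : ℝ, 0 < c ∧ (∀ (k : ℤ) x, ff c a b k x ≤ N x) ∧
      ∀ x, ∃ k : ℤ, (0 ≤ k ∧ k < 2 * lam) ∧ ff c a b k x = N x := by
  obtain ⟨hn, r, hr, θ, hball⟩ := hN
  obtain ⟨hb0, hb4, hs, hc, hc2⟩ := b_bounds lam hlam b hb
  have hl : (2 : ℝ) ≤ lam := by exact_mod_cast hlam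
  have H1 : ∀ (k : ℤ) x, ff (1 / (r * cos b)) (θ + b) b k x ≤ N x := by
    intro k
    have hsub : {x | N x ≤ 1} ⊆ {x | ff (1 / (r * cos b)) (θ + b) b k x ≤ 1} := by
      rw [hball]
      apply convexHull_min
      · rintro _ ⟨j, rfl⟩
        simp only [Set.mem_ofPred_eq, polyVerts]
        rw [ff_polar]
        have e : θ + b - (θ + (j : ℕ) * π / lam) + 2 * k * b = ((1 + 2 * k - 2 * (j : ℕ) : ℤ) : ℝ) * b := by
          rw [← hb]; push_cast; field_simp; ring
        rw [e]
        have hle : cos (((1 + 2 * k - 2 * (j : ℕ) : ℤ) : ℝ) * b) ≤ cos b := by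
          have i1 := sin_sq_add_cos_sq b
          have i2 := sin_sq_add_cos_sq (((1 + 2 * k - 2 * (j : ℕ) : ℤ) : ℝ) * b)
          have hsq : cos (((1 + 2 * k - 2 * (j : ℕ) : ℤ) : ℝ) * b) ^ 2 ≤ cos b ^ 2 := by
            by_cases hcase : sin (((1 + 2 * k - 2 * (j : ℕ) : ℤ) : ℝ) * b) ^ 2 ≤ sin b ^ 2
            · rcases trigL2 lam hlam b hb _ hcase with h | h
              · obtain ⟨⟨z, hz⟩, _⟩ := h
                exfalso
                rw [mul_assoc] at hz
                omega
              · exact h.le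
            · push Not at hcase
              linarith
          exact abs_le_of_sq_le_sq' hsq hc.le |>.2
        rw [show 1 / (r * cos b) * r = 1 / cos b by field_simp]
        rw [one_div, inv_mul_le_iff₀ hc]
        linarith
      · intro x hx y hy s t hs' ht' hst
        simp only [Set.mem_ofPred_eq] at *
        rw [ff_add, ff_smul, ff_smul]
        nlinarith
    intro x
    rcases (lamNorm_nonneg hn x).eq_or_lt with h0 | h0
    · have := hn.2.2 x h0.symm
      rw [← h0, this]; simp [ff]
    · have : ff (1 / (r * cos b)) (θ + b) b k ((N x)⁻¹ • x) ≤ 1 := by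
        apply hsub
        simp only [Set.mem_ofPred_eq]
        rw [hn.2.1, abs_of_pos (inv_pos.2 h0), inv_mul_cancel₀ h0.ne']
      rw [ff_smul, inv_mul_le_iff₀ h0] at this
      linarith
  refine ⟨1 / (r * cos b), θ + b, by positivity, H1, ?_⟩
  have hv : ∀ k : ℤ, N (r * cos (θ + 2 * k * b), r * sin (θ + 2 * k * b)) ≤ 1 := by
    intro k
    have := subset_convexHull ℝ _ (vert_mem lam hlam b hb r θ k)
    rw [← hball] at this
    exact this
  intro x
  obtain ⟨ρ, w, hρ, rfl⟩ := polar x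
  set k : ℤ := ⌊(w - θ) / (2 * b)⌋ with hk
  have hk1 : (k : ℝ) * (2 * b) ≤ w - θ := by
    rw [← le_div_iff₀ (by positivity)]; exact Int.floor_le _
  have hk2 : w - θ < (k + 1) * (2 * b) := by
    rw [← div_lt_iff₀ (by positivity)]; exact Int.lt_floor_add_one _
  obtain ⟨τ, hτ⟩ : ∃ τ, w = θ + 2 * k * b + τ := ⟨w - (θ + 2 * k * b), by ring⟩
  have hτ0 : 0 ≤ τ := by linarith
  have hτ1 : τ ≤ 2 * b := by linarith
  have hpi := Real.pi_pos
  have s1 : 0 ≤ sin τ := Real.sin_nonneg_of_nonneg_of_le_pi hτ0 (by linarith)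
  have s2 : 0 ≤ sin (2 * b - τ) :=
    Real.sin_nonneg_of_nonneg_of_le_pi (by linarith) (by linarith)
  have s3 : 0 < sin (2 * b) := Real.sin_pos_of_pos_of_lt_pi (by linarith) (by linarith)
  have hval : ff (1 / (r * cos b)) (θ + b) b k (ρ * cos w, ρ * sin w)
      = ρ * sin (2 * b - τ) / (r * sin (2 * b)) + ρ * sin τ / (r * sin (2 * b)) := by
    rw [ff_polar, hτ, show θ + b - (θ + 2 * k * b + τ) + 2 * k * b = b - τ by ring, sin_sub,
      cos_sub, sin_two_mul, cos_two_mul]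
    have := sin_sq_add_cos_sq b
    field_simp
    grind
  have hle : N (ρ * cos w, ρ * sin w) ≤
      ρ * sin (2 * b - τ) / (r * sin (2 * b)) + ρ * sin τ / (r * sin (2 * b)) := by
    have e : ((ρ * cos w, ρ * sin w) : ℝ × ℝ) =
        (ρ * sin (2 * b - τ) / (r * sin (2 * b))) •
          ((r * cos (θ + 2 * k * b), r * sin (θ + 2 * k * b)) : ℝ × ℝ) +
        (ρ * sin τ / (r * sin (2 * b))) •
          ((r * cos (θ + 2 * (k + 1 : ℤ) * b), r * sin (θ + 2 * (k + 1 : ℤ) * b)) : ℝ × ℝ) := by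
      have e1 : θ + 2 * ((k + 1 : ℤ) : ℝ) * b = (θ + 2 * k * b) + 2 * b := by push_cast; ring
      rw [e1, hτ]
      generalize θ + 2 * k * b = φ
      have := sin_sq_add_cos_sq (2 * b)
      ext
      · simp only [Prod.smul_mk, Prod.mk_add_mk, smul_eq_mul]
        rw [cos_add φ τ, cos_add φ (2 * b), sin_sub]
        field_simp
        grind
      · simp only [Prod.smul_mk, Prod.mk_add_mk, smul_eq_mul]
        rw [sin_add φ τ, sin_add φ (2 * b), sin_sub]
        field_simp
        grind
    rw [e]
    refine (hn.1 _ _).trans ?_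
    rw [hn.2.1, hn.2.1, abs_of_nonneg (by positivity), abs_of_nonneg (by positivity)]
    exact add_le_add (mul_le_of_le_one_right (by positivity) (hv k))
      (mul_le_of_le_one_right (by positivity) (hv (k + 1)))
  have heq := le_antisymm (H1 k _) (hval ▸ hle)
  refine ⟨k % (2 * lam), ⟨Int.emod_nonneg _ (by omega), Int.emod_lt_of_pos _ (by omega)⟩, ?_⟩
  rw [← heq, ← ff_period lam _ _ b hb (k % (2 * lam)) (k / (2 * lam)), Int.emod_add_mul_ediv]

lemma active_adj (lam : ℕ) (hlam : 2 ≤ lam) (b : ℝ) (hb : 2 * lam * b = π)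
    (N : ℝ × ℝ → ℝ) (c a : ℝ) (hc : 0 < c) (H1 : ∀ (k : ℤ) x, ff c a b k x ≤ N x)
    (x : ℝ × ℝ) (hx : 0 < N x) (k k' : ℤ) (hk : ff c a b k x = N x)
    (hk' : ff c a b k' x = N x) :
    ∃ z : ℤ, k' - k = 2 * lam * z ∨ k' - k = 2 * lam * z + 1 ∨ k' - k = 2 * lam * z - 1 := by
  obtain ⟨hb0, hb4, hs, hcb, hc2⟩ := b_bounds lam hlam b hb
  apply trigL lam hlam b hb
  obtain ⟨A, hA⟩ : ∃ A, A = x.1 * cos (a + 2 * k * b) + x.2 * sin (a + 2 * k * b) := ⟨_, rfl⟩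
  obtain ⟨B, hB⟩ : ∃ B, B = -x.1 * sin (a + 2 * k * b) + x.2 * cos (a + 2 * k * b) := ⟨_, rfl⟩
  have key : ∀ j : ℤ, ff c a b (k + j) x = c * (A * cos (2 * (j * b)) + B * sin (2 * (j * b))) := by
    intro j
    have : a + 2 * ((k + j : ℤ) : ℝ) * b = (a + 2 * k * b) + 2 * (j * b) := by push_cast; ring
    rw [ff, this, cos_add _ (2 * (j * b)), sin_add _ (2 * (j * b)), hA, hB]; ring
  have hN : N x = c * A := by rw [← hk, hA]; rfl
  have hApos : 0 < A := by rw [hN] at hx; exact pos_of_mul_pos_right hx hc.le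
  have u1 := H1 (k + 1) x
  have u2 := H1 (k + (-1)) x
  rw [key, hN] at u1 u2
  have u1 := le_of_mul_le_mul_left u1 hc
  have u2 := le_of_mul_le_mul_left u2 hc
  have e1 : 2 * (((1 : ℤ) : ℝ) * b) = 2 * b := by push_cast; ring
  have e2 : 2 * (((-1 : ℤ) : ℝ) * b) = -(2 * b) := by push_cast; ring
  rw [e1, sin_two_mul, cos_two_mul] at u1
  rw [e2, cos_neg, sin_neg, sin_two_mul, cos_two_mul] at u2
  have ib := sin_sq_add_cos_sq b
  have v1 : B * cos b ≤ A * sin b := by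
    have : sin b * (B * cos b) ≤ sin b * (A * sin b) := by nlinarith
    exact le_of_mul_le_mul_left this hs
  have v2 : -(A * sin b) ≤ B * cos b := by
    have : sin b * (-(A * sin b)) ≤ sin b * (B * cos b) := by nlinarith
    exact le_of_mul_le_mul_left this hs
  have v3 : (B * cos b) ^ 2 ≤ (A * sin b) ^ 2 := sq_le_sq' v2 v1
  have w := hk'
  rw [show k' = k + (k' - k) by ring, key, hN] at w
  have w := mul_left_cancel₀ hc.ne' w
  generalize k' - k = j at *
  have ij := sin_sq_add_cos_sq (j * b)
  rw [sin_two_mul, cos_two_mul] at w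
  have w2 : sin (j * b) * (B * cos (j * b) - A * sin (j * b)) = 0 := by
    have : cos (j * b) ^ 2 = 1 - sin (j * b) ^ 2 := by linarith
    rw [this] at w; linarith
  rcases mul_eq_zero.1 w2 with h | h
  · rw [h, zero_pow two_ne_zero]; positivity
  · have h : A * sin (j * b) = B * cos (j * b) := by linarith
    have h5 : A ^ 2 * (sin (j * b) ^ 2 * cos b ^ 2) ≤ A ^ 2 * (sin b ^ 2 * cos (j * b) ^ 2) := by
      calc _ = (A * sin (j * b)) ^ 2 * cos b ^ 2 := by ring
        _ = (B * cos b) ^ 2 * cos (j * b) ^ 2 := by rw [h]; ring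
        _ ≤ (A * sin b) ^ 2 * cos (j * b) ^ 2 := by gcongr
        _ = _ := by ring
    have h6 := le_of_mul_le_mul_left h5 (by positivity)
    nlinarith

lemma edge_data (lam : ℕ) (hlam : 2 ≤ lam) (b : ℝ) (hb : 2 * lam * b = π) (g : ℝ) (k k' : ℤ)
    (hk : ∃ z : ℤ, k' - k = 2 * lam * z ∨ k' - k = 2 * lam * z + 1 ∨ k' - k = 2 * lam * z - 1)
    (hc : cos (g + 2 * k' * b) = cos (g + 2 * k * b)) :
    sin (g + 2 * k' * b) = sin (g + 2 * k * b) ∨ ((sin (g + 2 * k * b + b) = 0 ∨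
      sin (g + 2 * k * b - b) = 0) ∧ sin (g + 2 * k' * b) = - sin (g + 2 * k * b)) := by
  obtain ⟨hb0, hb4, hs, hcb, hc2⟩ := b_bounds lam hlam b hb
  obtain ⟨z, hz | hz | hz⟩ := hk
  · left
    have : g + 2 * k' * b = g + 2 * k * b + z * (2 * π) := by
      rw [show k' = k + 2 * lam * z by omega, ← hb]; push_cast; ring
    rw [this, sin_add_int_mul_two_pi]
  · right
    have e : g + 2 * k' * b = (g + 2 * k * b + b) + b + z * (2 * π) := by
      rw [show k' = k + (2 * lam * z + 1) by omega, ← hb]; push_cast; ring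
    have e' : g + 2 * k * b = (g + 2 * k * b + b) - b := by ring
    rw [e, cos_add_int_mul_two_pi] at hc
    nth_rewrite 2 [e'] at hc
    rw [cos_add (_ + b), cos_sub (_ + b)] at hc
    have h0 : sin (g + 2 * k * b + b) = 0 := by
      have : sin (g + 2 * k * b + b) * sin b = 0 := by linarith
      exact (mul_eq_zero.1 this).resolve_right hs.ne'
    refine ⟨Or.inl h0, ?_⟩
    rw [e, sin_add_int_mul_two_pi]
    nth_rewrite 2 [e']
    rw [sin_add (_ + b), sin_sub (_ + b), h0]; ring
  · right
    have e : g + 2 * k' * b = (g + 2 * k * b - b) - b + z * (2 * π) := by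
      rw [show k' = k + (2 * lam * z - 1) by omega, ← hb]; push_cast; ring
    have e' : g + 2 * k * b = (g + 2 * k * b - b) + b := by ring
    rw [e, cos_add_int_mul_two_pi] at hc
    nth_rewrite 2 [e'] at hc
    rw [cos_add (_ - b), cos_sub (_ - b)] at hc
    have h0 : sin (g + 2 * k * b - b) = 0 := by
      have : sin (g + 2 * k * b - b) * sin b = 0 := by linarith
      exact (mul_eq_zero.1 this).resolve_right hs.ne'
    refine ⟨Or.inr h0, ?_⟩
    rw [e, sin_add_int_mul_two_pi]
    nth_rewrite 2 [e']
    rw [sin_add (_ - b), sin_sub (_ - b), h0]; ring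

open Filter Topology in
lemma local_active (lam : ℕ) (b : ℝ)
    (N : ℝ × ℝ → ℝ) (c a : ℝ) (H1 : ∀ (k : ℤ) x, ff c a b k x ≤ N x)
    (H2 : ∀ x, ∃ k : ℤ, (0 ≤ k ∧ k < 2 * lam) ∧ ff c a b k x = N x) (x : ℝ × ℝ) :
    ∀ᶠ y in 𝓝 x, ∀ k ∈ Set.Ico (0 : ℤ) (2 * lam), ff c a b k y = N y → ff c a b k x = N x := by
  rw [eventually_all_finite (Set.finite_Ico _ _)]
  intro k _
  by_cases hk : ff c a b k x = N x
  · exact Eventually.of_forall fun y _ => hk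
  · obtain ⟨j, _, hj⟩ := H2 x
    have hlt : ff c a b k x < ff c a b j x := by
      rw [hj]; exact lt_of_le_of_ne (H1 k x) hk
    filter_upwards [(ff_cont c a b k).continuousAt.eventually_lt
      (ff_cont c a b j).continuousAt hlt] with y hy hy2
    have := H1 j y
    linarith

open Filter Topology in
lemma optimality (lam : ℕ) (b : ℝ)
    (N : ℝ × ℝ → ℝ) (c a : ℝ) (H1 : ∀ (k : ℤ) x, ff c a b k x ≤ N x)
    (H2 : ∀ x, ∃ k : ℤ, (0 ≤ k ∧ k < 2 * lam) ∧ ff c a b k x = N x)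
    (m x₁ x₂ x₃ v : ℝ × ℝ)
    (hm : ∀ q, N (m - x₁) + N (m - x₂) + N (m - x₃) ≤ N (q - x₁) + N (q - x₂) + N (q - x₃)) :
    ∃ k₁ k₂ k₃ : ℤ, ff c a b k₁ (m - x₁) = N (m - x₁) ∧ ff c a b k₂ (m - x₂) = N (m - x₂) ∧
      ff c a b k₃ (m - x₃) = N (m - x₃) ∧
      0 ≤ ff c a b k₁ v + ff c a b k₂ v + ff c a b k₃ v := by
  have ht : ∀ y : ℝ × ℝ, Tendsto (fun t : ℝ => y + t • v) (𝓝[>] 0) (𝓝 y) := by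
    intro y
    have : ContinuousAt (fun t : ℝ => y + t • v) 0 := by fun_prop
    have h := this.tendsto
    simp only [zero_smul, add_zero] at h
    exact h.mono_left nhdsWithin_le_nhds
  have L := fun y => (ht y).eventually (local_active lam b N c a H1 H2 y)
  obtain ⟨t, ⟨⟨l1, l2⟩, l3⟩, htpos⟩ := (((L (m - x₁)).and (L (m - x₂))).and (L (m - x₃))).and
    (self_mem_nhdsWithin : Set.Ioi (0 : ℝ) ∈ 𝓝[>] (0 : ℝ)) |>.exists
  obtain ⟨k₁, i1, e1⟩ := H2 (m - x₁ + t • v)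
  obtain ⟨k₂, i2, e2⟩ := H2 (m - x₂ + t • v)
  obtain ⟨k₃, i3, e3⟩ := H2 (m - x₃ + t • v)
  have a1 := l1 k₁ i1 e1
  have a2 := l2 k₂ i2 e2
  have a3 := l3 k₃ i3 e3
  refine ⟨k₁, k₂, k₃, a1, a2, a3, ?_⟩
  have h := hm (m + t • v)
  rw [add_sub_right_comm, add_sub_right_comm, add_sub_right_comm, ← e1, ← e2, ← e3] at h
  simp only [ff_add, ff_smul] at h
  have htp : 0 < t := htpos
  have : 0 ≤ t * (ff c a b k₁ v + ff c a b k₂ v + ff c a b k₃ v) := by linarith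
  exact nonneg_of_mul_nonneg_right this htp

lemma exists_min (lam : ℕ) (hlam : 2 ≤ lam) (b : ℝ)
    (N : ℝ × ℝ → ℝ) (hN : IsLambdaNorm lam N) (c a : ℝ)
    (H1 : ∀ (k : ℤ) x, ff c a b k x ≤ N x)
    (H2 : ∀ x, ∃ k : ℤ, (0 ≤ k ∧ k < 2 * lam) ∧ ff c a b k x = N x)
    (x₁ x₂ x₃ : ℝ × ℝ) :
    ∃ m, ∀ q, N (m - x₁) + N (m - x₂) + N (m - x₃) ≤ N (q - x₁) + N (q - x₂) + N (q - x₃) := by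
  have hcont : Continuous N := by
    have hne : (Finset.Ico (0 : ℤ) (2 * lam)).Nonempty := by
      rw [Finset.nonempty_Ico]; omega
    have : N = fun x => (Finset.Ico (0 : ℤ) (2 * lam)).sup' hne (fun k => ff c a b k x) := by
      ext x
      apply le_antisymm
      · obtain ⟨k, hk, e⟩ := H2 x
        rw [← e]
        exact Finset.le_sup' (fun k => ff c a b k x) (Finset.mem_Ico.2 hk)
      · exact Finset.sup'_le _ _ fun k _ => H1 k x
    rw [this]
    exact Continuous.finset_sup'_apply hne fun k _ => ff_cont c a b k
  obtain ⟨hn, r, hr, θ, hball⟩ := hN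
  have hnn := lamNorm_nonneg hn
  have hbd : Bornology.IsBounded {x : ℝ × ℝ | N x ≤ 1} := by
    rw [hball, isBounded_convexHull]
    exact (Set.finite_range _).isBounded
  obtain ⟨R, hR⟩ := hbd.exists_norm_le
  set F : ℝ × ℝ → ℝ := fun q => N (q - x₁) + N (q - x₂) + N (q - x₃) with hF
  have hFc : Continuous F := by rw [hF]; fun_prop
  have hFn : 0 ≤ F x₁ := by rw [hF]; have := hnn (x₁ - x₁); have := hnn (x₁ - x₂); have := hnn (x₁ - x₃); positivity
  set s := F x₁ + 1 with hs
  have hs0 : 0 < s := by linarith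
  have hK : IsCompact {p : ℝ × ℝ | N (p - x₁) ≤ s} := by
    apply Metric.isCompact_of_isClosed_isBounded
    · exact isClosed_le (by fun_prop) continuous_const
    · apply (Metric.isBounded_closedBall (x := x₁) (r := s * R)).subset
      intro p hp
      rw [mem_closedBall_iff_norm]
      have : ‖s⁻¹ • (p - x₁)‖ ≤ R := by
        apply hR
        change N _ ≤ 1
        rw [hn.2.1, abs_of_pos (inv_pos.2 hs0), inv_mul_le_iff₀ hs0, mul_one]
        exact hp
      rw [norm_smul, Real.norm_of_nonneg (inv_pos.2 hs0).le, inv_mul_le_iff₀ hs0] at this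
      exact this
  have hN0 : N 0 = 0 := by have := hn.2.1 0 0; simpa using this
  have hx1 : x₁ ∈ {p : ℝ × ℝ | N (p - x₁) ≤ s} := by
    change N _ ≤ s
    rw [sub_self, hN0]; exact hs0.le
  obtain ⟨m, hm, hmin⟩ := hK.exists_isMinOn ⟨x₁, hx1⟩ hFc.continuousOn
  refine ⟨m, fun q => ?_⟩
  change F m ≤ F q
  by_cases hq : N (q - x₁) ≤ s
  · exact hmin hq
  · push Not at hq
    have h1 : F m ≤ F x₁ := hmin hx1
    have h2 : N (q - x₁) ≤ F q := by
      rw [hF]; have := hnn (q - x₂); have := hnn (q - x₃); simp only; linarith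
    linarith

lemma uniq_min (lam : ℕ) (hlam : 2 ≤ lam) (b : ℝ) (hb : 2 * lam * b = π)
    (N : ℝ × ℝ → ℝ) (hn : IsNormOn N) (c a : ℝ) (hc : 0 < c)
    (H1 : ∀ (k : ℤ) x, ff c a b k x ≤ N x)
    (H2 : ∀ x, ∃ k : ℤ, (0 ≤ k ∧ k < 2 * lam) ∧ ff c a b k x = N x)
    (x₁ x₂ x₃ p q : ℝ × ℝ) (hpq : p ≠ q)
    (hp : ∀ z, N (p - x₁) + N (p - x₂) + N (p - x₃) ≤ N (z - x₁) + N (z - x₂) + N (z - x₃))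
    (hq : ∀ z, N (q - x₁) + N (q - x₂) + N (q - x₃) ≤ N (z - x₁) + N (z - x₂) + N (z - x₃)) :
    3 ∣ lam := by
  have hnn := lamNorm_nonneg hn
  obtain ⟨m, hm⟩ : ∃ m : ℝ × ℝ, m = (1 / 2 : ℝ) • p + (1 / 2 : ℝ) • q := ⟨_, rfl⟩
  have hmx : ∀ x, m - x = (1 / 2 : ℝ) • (p - x) + (1 / 2 : ℝ) • (q - x) := by
    intro x; rw [hm]; module
  have hmle : ∀ x, N (m - x) ≤ (N (p - x) + N (q - x)) / 2 := by
    intro x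
    rw [hmx]
    refine (hn.1 _ _).trans ?_
    rw [hn.2.1, hn.2.1, abs_of_pos (by norm_num)]
    linarith
  have hpm := hp m
  have hqp := hq p
  have hpq' := hp q
  have m1 := hmle x₁
  have m2 := hmle x₂
  have m3 := hmle x₃
  have hmin : ∀ z, N (m - x₁) + N (m - x₂) + N (m - x₃) ≤
      N (z - x₁) + N (z - x₂) + N (z - x₃) := by
    intro z; have := hp z; linarith
  have E1 : N (m - x₁) = (N (p - x₁) + N (q - x₁)) / 2 := by linarith
  have E2 : N (m - x₂) = (N (p - x₂) + N (q - x₂)) / 2 := by linarith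
  have E3 : N (m - x₃) = (N (p - x₃) + N (q - x₃)) / 2 := by linarith
  have slope : ∀ x, N (m - x) = (N (p - x) + N (q - x)) / 2 → ∀ k : ℤ,
      ff c a b k (m - x) = N (m - x) → ff c a b k (q - p) = N (q - x) - N (p - x) := by
    intro x hx k hk
    have h1 := H1 k (p - x)
    have h2 := H1 k (q - x)
    rw [hx, hmx, ff_add, ff_smul, ff_smul] at hk
    have : q - p = (q - x) - (p - x) := by abel
    rw [this, ff_sub]
    linarith
  have posm : ∀ x, N (m - x) = (N (p - x) + N (q - x)) / 2 → 0 < N (m - x) := by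
    intro x hx
    rcases (hnn (m - x)).eq_or_lt with h | h
    · exfalso
      have h1 := hnn (p - x)
      have h2 := hnn (q - x)
      have h3 := hn.2.2 (p - x) (by linarith)
      have h4 := hn.2.2 (q - x) (by linarith)
      exact hpq ((sub_eq_zero.1 h3).trans (sub_eq_zero.1 h4).symm)
    · exact h
  obtain ⟨D, w, hD0, hd⟩ := polar (q - p)
  have hD : 0 < D := by
    rcases hD0.eq_or_lt with h | h
    · exfalso
      rw [← h] at hd
      have : q - p = 0 := by rw [hd]; simp
      exact hpq (sub_eq_zero.1 this).symm
    · exact h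
  have hcD : 0 < c * D := mul_pos hc hD
  have fd : ∀ k : ℤ, ff c a b k (q - p) = c * D * cos (a - w + 2 * k * b) := by
    intro k; rw [hd, ff_polar]
  have fe : ∀ k : ℤ, ff c a b k (-D * sin w, D * cos w) = c * D * sin (a - w + 2 * k * b) := by
    intro k
    have : a - w + 2 * k * b = (a + 2 * k * b) - w := by ring
    rw [this, sin_sub]
    simp only [ff]
    ring
  obtain ⟨k₁, k₂, k₃, a1, a2, a3, hS⟩ :=
    optimality lam b N c a H1 H2 m x₁ x₂ x₃ (-D * sin w, D * cos w) hmin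
  obtain ⟨l₁, l₂, l₃, b1, b2, b3, hT⟩ :=
    optimality lam b N c a H1 H2 m x₁ x₂ x₃ ((-1 : ℝ) • (-D * sin w, D * cos w)) hmin
  rw [ff_smul, ff_smul, ff_smul] at hT
  rw [fe, fe, fe] at hS hT
  have data : ∀ x, N (m - x) = (N (p - x) + N (q - x)) / 2 → ∀ k k' : ℤ,
      ff c a b k (m - x) = N (m - x) → ff c a b k' (m - x) = N (m - x) → _ :=
    fun x hx k k' hk hk' => edge_data lam hlam b hb (a - w) k k'
      (active_adj lam hlam b hb N c a hc H1 (m - x) (posm x hx) k k' hk hk') (by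
        have h1 := slope x hx k hk
        have h2 := slope x hx k' hk'
        rw [fd] at h1 h2
        exact mul_left_cancel₀ hcD.ne' (h2.trans h1.symm))
  have s1 := slope x₁ E1 k₁ a1
  have s2 := slope x₂ E2 k₂ a2
  have s3 := slope x₃ E3 k₃ a3
  rw [fd] at s1 s2 s3
  refine trig_main lam hlam b hb (a - w) k₁ k₂ k₃ _ _ _ (data x₁ E1 k₁ l₁ a1 b1)
    (data x₂ E2 k₂ l₂ a2 b2) (data x₃ E3 k₃ l₃ a3 b3) ?_ ?_ ?_
  · have : c * D * (cos (a - w + 2 * k₁ * b) + cos (a - w + 2 * k₂ * b) +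
      cos (a - w + 2 * k₃ * b)) = 0 := by linarith
    exact (mul_eq_zero.1 this).resolve_left hcD.ne'
  · exact nonneg_of_mul_nonneg_right (by linarith : 0 ≤ c * D * (sin (a - w + 2 * k₁ * b) +
      sin (a - w + 2 * k₂ * b) + sin (a - w + 2 * k₃ * b))) hcD
  · have := nonneg_of_mul_nonneg_right (by linarith : 0 ≤ c * D * (-(sin (a - w + 2 * l₁ * b) +
      sin (a - w + 2 * l₂ * b) + sin (a - w + 2 * l₃ * b)))) hcD
    linarith

open Filter Topology in
/-- If `3 ∣ λ`, some triple has at least two Fermat-Torricelli points. -/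
lemma non_uniq (mu : ℕ) (hmu : 1 ≤ mu) (b : ℝ) (hb : 2 * ((3 * mu : ℕ) : ℝ) * b = π)
    (N : ℝ × ℝ → ℝ) (c a : ℝ) (hc : 0 < c)
    (H1 : ∀ (k : ℤ) x, ff c a b k x ≤ N x)
    (H2 : ∀ x, ∃ k : ℤ, (0 ≤ k ∧ k < 2 * (3 * mu : ℕ)) ∧ ff c a b k x = N x) :
    ∃ x₁ x₂ x₃ p q : ℝ × ℝ, p ≠ q ∧
     (∀ z, N (p - x₁) + N (p - x₂) + N (p - x₃) ≤ N (z - x₁) + N (z - x₂) + N (z - x₃)) ∧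
     (∀ z, N (q - x₁) + N (q - x₂) + N (q - x₃) ≤ N (z - x₁) + N (z - x₂) + N (z - x₃)) := by
  let W : ℤ → ℝ × ℝ := fun k => (1 * cos (a + 2 * k * b), 1 * sin (a + 2 * k * b))
  have hW : ∀ k j : ℤ, ff c a b j (W k) = c * cos (2 * (j : ℝ) * b - 2 * k * b) := by
    intro k j
    rw [ff_polar]; congr 1
    · ring
    · congr 1; ring
  have hNW : ∀ k : ℤ, ff c a b k (W k) = N (W k) := by
    intro k
    apply le_antisymm (H1 _ _)
    obtain ⟨j, _, hj⟩ := H2 (W k)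
    rw [← hj, hW, hW, sub_self, cos_zero]
    exact mul_le_mul_of_nonneg_left (cos_le_one _) hc.le
  have hloc : ∀ k : ℤ, ∀ᶠ y in 𝓝 (0 : ℝ × ℝ), N (y - -W k) = ff c a b k (y - -W k) := by
    intro k
    have ht : Tendsto (fun y : ℝ × ℝ => y - -W k) (𝓝 0) (𝓝 (W k)) := by
      have : ContinuousAt (fun y : ℝ × ℝ => y - -W k) 0 := by fun_prop
      have h := this.tendsto
      simpa using h
    filter_upwards [ht.eventually (local_active (3 * mu) b N c a H1 H2 (W k))] with y hy
    obtain ⟨j, hj, e⟩ := H2 (y - -W k)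
    have hact := hy j hj e
    rw [← hNW, hW, hW, sub_self] at hact
    have h1 := mul_left_cancel₀ hc.ne' hact
    rw [cos_zero, cos_eq_one_iff] at h1
    obtain ⟨n, hn⟩ := h1
    rw [← e]
    have : a + 2 * j * b = a + 2 * k * b + n * (2 * π) := by linarith
    simp only [ff, this, cos_add_int_mul_two_pi, sin_add_int_mul_two_pi]
  have hsum : ∀ y, ff c a b 0 y + ff c a b (2 * mu) y + ff c a b (4 * mu) y = 0 := by
    intro y
    have hb' : 6 * (mu * b) = π := by rw [← hb]; push_cast; ring
    have e1 : a + 2 * ((2 * mu : ℤ) : ℝ) * b = a + (π - π / 3) := by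
      push_cast; linarith
    have e2 : a + 2 * ((4 * mu : ℤ) : ℝ) * b = a + (π / 3 + π) := by
      push_cast; linarith
    have e0 : a + 2 * ((0 : ℤ) : ℝ) * b = a := by push_cast; ring
    simp only [ff, e0, e1, e2, cos_add a, sin_add a, cos_pi_sub, sin_pi_sub, cos_add_pi,
      sin_add_pi, cos_pi_div_three, sin_pi_div_three]
    ring
  have hall := ((hloc 0).and (hloc (2 * mu))).and (hloc (4 * mu))
  have hgen : ∀ p : ℝ × ℝ, ((N (p - -W 0) = ff c a b 0 (p - -W 0) ∧
      N (p - -W (2 * mu)) = ff c a b (2 * mu) (p - -W (2 * mu))) ∧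
      N (p - -W (4 * mu)) = ff c a b (4 * mu) (p - -W (4 * mu))) →
      ∀ z, N (p - -W 0) + N (p - -W (2 * mu)) + N (p - -W (4 * mu)) ≤
        N (z - -W 0) + N (z - -W (2 * mu)) + N (z - -W (4 * mu)) := by
    rintro p ⟨⟨h1, h2⟩, h3⟩ z
    have u1 := H1 0 (z - -W 0)
    have u2 := H1 (2 * mu) (z - -W (2 * mu))
    have u3 := H1 (4 * mu) (z - -W (4 * mu))
    rw [h1, h2, h3]
    rw [ff_sub] at u1 u2 u3 ⊢
    rw [ff_sub c a b (2 * mu), ff_sub c a b (4 * mu)]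
    have := hsum p
    have := hsum z
    linarith
  have h0 := hgen 0 hall.self_of_nhds
  obtain ⟨q, hq, hq0⟩ := ((hall.filter_mono nhdsWithin_le_nhds).and
    (self_mem_nhdsWithin : ({0}ᶜ : Set (ℝ × ℝ)) ∈ 𝓝[≠] (0 : ℝ × ℝ))).exists
  exact ⟨-W 0, -W (2 * mu), -W (4 * mu), 0, q, fun h => hq0 h.symm, h0, hgen q hq⟩

/-- In a λ-normed plane, the Fermat–Torricelli set is a singleton for every triple of
points if and only if λ is not divisible by 3. -/
theorem lambda_plane_ft_singleton_iff
    (lam : ℕ) (hlam : 2 ≤ lam)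
    (N : ℝ × ℝ → ℝ) (hN : IsLambdaNorm lam N) :
    (∀ x₁ x₂ x₃ : ℝ × ℝ, ∃ p : ℝ × ℝ, ftSetN N ![x₁, x₂, x₃] = {p}) ↔ ¬ 3 ∣ lam := by
  have hl : (2 : ℝ) ≤ lam := by exact_mod_cast hlam
  obtain ⟨b, hb⟩ : ∃ b : ℝ, 2 * lam * b = π := ⟨π / (2 * lam), by field_simp⟩
  obtain ⟨c, a, hc, H1, H2⟩ := repr_norm lam hlam b hb N hN
  have hmem : ∀ x₁ x₂ x₃ p : ℝ × ℝ, p ∈ ftSetN N ![x₁, x₂, x₃] ↔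
      ∀ z, N (p - x₁) + N (p - x₂) + N (p - x₃) ≤ N (z - x₁) + N (z - x₂) + N (z - x₃) := by
    intro x₁ x₂ x₃ p
    change (∀ q : ℝ × ℝ, ∑ i, N (p - ![x₁, x₂, x₃] i) ≤ ∑ i, N (q - ![x₁, x₂, x₃] i)) ↔ _
    simp [Fin.sum_univ_three]
  constructor
  · rintro h ⟨mu, rfl⟩
    obtain ⟨x₁, x₂, x₃, p, q, hpq, hp, hq⟩ := non_uniq mu (by omega) b hb N c a hc H1 H2
    obtain ⟨y, hy⟩ := h x₁ x₂ x₃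
    rw [← hmem, hy] at hp hq
    exact hpq (hp.trans hq.symm)
  · intro h x₁ x₂ x₃
    obtain ⟨m, hm⟩ := exists_min lam hlam b N hN c a H1 H2 x₁ x₂ x₃
    refine ⟨m, ?_⟩
    ext q
    rw [hmem]
    constructor
    · intro hq
      by_contra hne
      exact h (uniq_min lam hlam b hb N hN.1 c a hc H1 H2 x₁ x₂ x₃ q m hne hq hm)
    · rintro rfl
      exact hm
end
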